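/- arXiv:2211.09327 — 2 statements merged into one kernel-verified Lean document; each statement's English description precedes it below -/
import Mathlib

section
/- For the cycle graph C_n on n vertices, the vertex-edge dominant edge metric dimension satisfies: γ_emd(C_n) = 2 if 3 ≤ n ≤ 7; γ_emd(C_n) = 3 if n = 8; and γ_emd(C_n) = ⌊(n+3)/4⌋ if n ≥ 9. -/
/-!
Label the edges of `C_n` by `i ↦ {i, i + 1}`. If `d` is the residue of `i - w` modulo `n`, then the
distance from the vertex `w` to the edge `i` is `min d (n - 1 - d)` (`edgeDist_cycleEdge`). Both
conditions on a set of vertices can be read off this formula: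

* `w` ve-dominates the edge `i` iff that distance is at most `1`, i.e. iff
  `d ∈ {0, 1, n - 2, n - 1}`. A vertex thus dominates at most four edges, so a ve-dominating set has
  at least `⌈n / 4⌉ = ⌊(n + 3) / 4⌋` elements (`le_four_mul_card`).
* Distinct edges `i`, `j` are at the same distance from `w` iff `i + j ≡ 2w - 1 (mod n)`. Hence one
  vertex never resolves all edges, and two vertices `a`, `b` do iff `2a ≢ 2b (mod n)`.

For `n ≥ 5` the multiples of `4` below `n` form a ve-dominating set of size `⌈n / 4⌉`, and `0` and `4`
resolve all edges unless `n = 8`. The set `{0, 1}` serves for `n = 3, 4`. When `n = 8`, a ve-dominating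
pair is antipodal, hence not resolving, and `{0, 1, 4}` has the required properties.
-/

open SimpleGraph

/-- Distance from a vertex `w` to an edge `e = xy`: `min (d w x) (d w y)`. -/
noncomputable def edgeDist {V : Type*} (G : SimpleGraph V) (w : V) (e : Sym2 V) : ℕ :=
  Sym2.lift ⟨fun x y => min (G.dist w x) (G.dist w y), fun _ _ => min_comm _ _⟩ e

/-- `A` is an edge resolving set: any two distinct edges are distinguished by some vertex of `A`. -/
def IsEdgeResolvingSet {V : Type*} (G : SimpleGraph V) (A : Set V) : Prop :=
  ∀ e ∈ G.edgeSet, ∀ f ∈ G.edgeSet, e ≠ f → ∃ w ∈ A, edgeDist G w e ≠ edgeDist G w f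

/-- A vertex `w` ve-dominates an edge `e = xy` if `w ∈ {x, y}` or `w` is adjacent to `x` or `y`. -/
def VEDominates {V : Type*} (G : SimpleGraph V) (w : V) (e : Sym2 V) : Prop :=
  ∃ x y, e = s(x, y) ∧ (w = x ∨ w = y ∨ G.Adj w x ∨ G.Adj w y)

/-- `T` is a vertex-edge dominating set: every edge is ve-dominated by some vertex of `T`. -/
def IsVEDominatingSet {V : Type*} (G : SimpleGraph V) (T : Set V) : Prop :=
  ∀ e ∈ G.edgeSet, ∃ w ∈ T, VEDominates G w e

/-- The vertex-edge domination number `γ_ve`. -/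
noncomputable def gammaVe {V : Type*} (G : SimpleGraph V) [Fintype V] : ℕ :=
  sInf {k | ∃ T : Finset V, T.card = k ∧ IsVEDominatingSet G ↑T}

/-- The edge metric dimension `β_e`. -/
noncomputable def betaE {V : Type*} (G : SimpleGraph V) [Fintype V] : ℕ :=
  sInf {k | ∃ A : Finset V, A.card = k ∧ IsEdgeResolvingSet G ↑A}

/-- The vertex-edge dominant edge metric dimension `γ_emd`. -/
noncomputable def gammaEmd {V : Type*} (G : SimpleGraph V) [Fintype V] : ℕ :=
  sInf {k | ∃ S : Finset V, S.card = k ∧ IsVEDominatingSet G ↑S ∧ IsEdgeResolvingSet G ↑S}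

/-- `B` is a (vertex) resolving set. -/
def IsResolvingSet {V : Type*} (G : SimpleGraph V) (B : Set V) : Prop :=
  ∀ u v : V, u ≠ v → ∃ w ∈ B, G.dist w u ≠ G.dist w v

/-- `S` is a dominating set. -/
def IsDominatingSet {V : Type*} (G : SimpleGraph V) (S : Set V) : Prop :=
  ∀ v ∉ S, ∃ u ∈ S, G.Adj u v

/-- The metric dimension `β`. -/
noncomputable def metricDim {V : Type*} (G : SimpleGraph V) [Fintype V] : ℕ :=
  sInf {k | ∃ B : Finset V, B.card = k ∧ IsResolvingSet G ↑B}

/-- The dominant metric dimension `γ_md`. -/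
noncomputable def gammaMd {V : Type*} (G : SimpleGraph V) [Fintype V] : ℕ :=
  sInf {k | ∃ D : Finset V, D.card = k ∧ IsDominatingSet G ↑D ∧ IsResolvingSet G ↑D}

/-- The wheel graph `W_{1,n}`: a hub (`none`) joined to every vertex of a cycle on `Fin n`. -/
def wheelGraph (n : ℕ) : SimpleGraph (Option (Fin n)) :=
  SimpleGraph.fromRel (fun u v =>
    (u = none ∧ v ≠ none) ∨
    (∃ i j : Fin n, u = some i ∧ v = some j ∧ (i.val + 1) % n = j.val))

/-- The fan graph `F_{1,n}`: a hub (`none`) joined to every vertex of a path on `Fin n`. -/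
def fanGraph (n : ℕ) : SimpleGraph (Option (Fin n)) :=
  SimpleGraph.fromRel (fun u v =>
    (u = none ∧ v ≠ none) ∨
    (∃ i j : Fin n, u = some i ∧ v = some j ∧ i.val + 1 = j.val))

/-- The star graph `S_{1,n}`: a hub (`none`) joined to `n` leaves. -/
def starGraph (n : ℕ) : SimpleGraph (Option (Fin n)) :=
  SimpleGraph.fromRel (fun u v => u = none ∧ v ≠ none)

theorem cycleGraph_adj_val {n : ℕ} (hn : 3 ≤ n) {u v : Fin n} :
    (cycleGraph n).Adj u v ↔ u.val + 1 = v.val ∨ v.val + 1 = u.val ∨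
      (u.val = 0 ∧ v.val + 1 = n) ∨ (v.val = 0 ∧ u.val + 1 = n) := by
  rw [cycleGraph_adj']
  have hu := u.isLt
  have hv := v.isLt
  rcases le_or_gt u v with h | h
  · rw [Fin.sub_val_of_le h]
    rcases h.eq_or_lt with h' | h'
    · subst h'
      rw [Fin.sub_val_of_le le_rfl, Nat.sub_self]
      omega
    · rw [Fin.coe_sub_iff_lt.2 h']
      have := Fin.lt_def.1 h'
      omega
  · rw [Fin.sub_val_of_le h.le, Fin.coe_sub_iff_lt.2 h]
    have := Fin.lt_def.1 h
    omega

/-- The length of the shorter of the two arcs between `u` and `v` in `C_n`. The sum of the two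
truncated differences is `|u - v|`. -/
def arcDist {n : ℕ} (u v : Fin n) : ℕ :=
  min ((u.val - v.val) + (v.val - u.val)) (n - ((u.val - v.val) + (v.val - u.val)))

theorem cycleGraph_connected_of_three_le {n : ℕ} (hn : 3 ≤ n) : (cycleGraph n).Connected := by
  obtain ⟨m, rfl⟩ : ∃ m, n = m + 1 := ⟨n - 1, by omega⟩
  exact cycleGraph_connected

theorem dist_le_of_val_add {n : ℕ} (hn : 3 ≤ n) (k : ℕ) (u v : Fin n) (h : v.val = u.val + k) :
    (cycleGraph n).dist u v ≤ k := by
  induction k generalizing v with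
  | zero =>
    have : u = v := Fin.ext (by omega)
    simp [this]
  | succ k ih =>
    have hv := v.isLt
    have h1 := ih ⟨u.val + k, by omega⟩ rfl
    have h2 : (cycleGraph n).dist ⟨u.val + k, by omega⟩ v = 1 :=
      dist_eq_one_iff_adj.2 ((cycleGraph_adj_val hn).2 (Or.inl (by simp; omega)))
    have h3 := (cycleGraph_connected_of_three_le hn).dist_triangle
      (u := u) (v := ⟨u.val + k, by omega⟩) (w := v)
    omega

theorem dist_le_arcDist {n : ℕ} (hn : 3 ≤ n) (u v : Fin n) :
    (cycleGraph n).dist u v ≤ arcDist u v := by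
  wlog huv : u.val ≤ v.val generalizing u v
  · have := this v u (by omega)
    rw [SimpleGraph.dist_comm]
    unfold arcDist at *
    omega
  have hc := cycleGraph_connected_of_three_le hn
  have hv := v.isLt
  let z : Fin n := ⟨0, by omega⟩
  let l : Fin n := ⟨n - 1, by omega⟩
  have h1 := dist_le_of_val_add hn (v.val - u.val) u v (by omega)
  -- The other arc runs from `u` down to `0`, across to `n - 1`, and down to `v`.
  have h2 := dist_le_of_val_add hn u.val z u (by simp [z])
  have h3 := dist_le_of_val_add hn (n - 1 - v.val) v l (by simp [l]; omega)
  have h4 : (cycleGraph n).dist z l = 1 :=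
    dist_eq_one_iff_adj.2 ((cycleGraph_adj_val hn).2 (by simp [z, l]; omega))
  have h5 := hc.dist_triangle (u := u) (v := z) (w := v)
  have h6 := hc.dist_triangle (u := z) (v := l) (w := v)
  rw [SimpleGraph.dist_comm] at h2 h3
  unfold arcDist
  omega

theorem arcDist_le_length {n : ℕ} (hn : 3 ≤ n) {u v : Fin n} (p : (cycleGraph n).Walk u v) :
    arcDist u v ≤ p.length := by
  induction p with
  | nil => simp [arcDist]
  | @cons a b c h p ih =>
    rw [cycleGraph_adj_val hn] at h
    rw [Walk.length_cons]
    have ha := a.isLt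
    have hb := b.isLt
    have hc := c.isLt
    unfold arcDist at *
    omega

theorem cycleGraph_dist {n : ℕ} (hn : 3 ≤ n) (u v : Fin n) :
    (cycleGraph n).dist u v = arcDist u v := by
  refine le_antisymm (dist_le_arcDist hn u v) ?_
  obtain ⟨p, hp⟩ := (cycleGraph_connected_of_three_le hn).exists_walk_length_eq_dist u v
  exact hp ▸ arcDist_le_length hn p

/-- The successor of `i` on the cycle. -/
def cycleNext {n : ℕ} (i : Fin n) : Fin n :=
  ⟨if i.val + 1 = n then 0 else i.val + 1, by have := i.isLt; split <;> omega⟩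

/-- The edge of `C_n` joining `i` to its successor. -/
def cycleEdge {n : ℕ} (i : Fin n) : Sym2 (Fin n) := s(i, cycleNext i)

/-- The residue of `i - w` modulo `n`: the number of forward steps from `w` to `i`. -/
def offset {n : ℕ} (w i : Fin n) : ℕ :=
  if w.val ≤ i.val then i.val - w.val else n + i.val - w.val

/-- The distance from the vertex `w` to the edge `cycleEdge i`, in closed form. -/
def arcEdgeDist {n : ℕ} (w i : Fin n) : ℕ := min (offset w i) (n - 1 - offset w i)

theorem edgeDist_cycleEdge {n : ℕ} (hn : 3 ≤ n) (w i : Fin n) :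
    edgeDist (cycleGraph n) w (cycleEdge i) = arcEdgeDist w i := by
  have hw := w.isLt
  have hi := i.isLt
  simp only [edgeDist, cycleEdge, Sym2.lift_mk, cycleGraph_dist hn, arcDist, arcEdgeDist, offset,
    cycleNext]
  split_ifs <;> omega

theorem mem_edgeSet_iff {n : ℕ} (hn : 3 ≤ n) (e : Sym2 (Fin n)) :
    e ∈ (cycleGraph n).edgeSet ↔ ∃ i, cycleEdge i = e := by
  induction e using Sym2.ind with
  | h x y =>
    rw [mem_edgeSet, cycleGraph_adj_val hn]
    have hx := x.isLt
    have hy := y.isLt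
    simp only [cycleEdge, Sym2.eq_iff]
    constructor
    · intro h
      by_cases h1 : cycleNext x = y
      · exact ⟨x, Or.inl ⟨rfl, h1⟩⟩
      · refine ⟨y, Or.inr ⟨rfl, ?_⟩⟩
        simp only [cycleNext, Fin.ext_iff] at h1 ⊢
        split_ifs at h1 ⊢ <;> omega
    · rintro ⟨i, ⟨rfl, h⟩ | ⟨rfl, h⟩⟩ <;>
      · simp only [cycleNext, Fin.ext_iff] at h
        split_ifs at h <;> omega

theorem cycleEdge_injective {n : ℕ} (hn : 3 ≤ n) : Function.Injective (cycleEdge (n := n)) := by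
  intro i j h
  have hi := i.isLt
  have hj := j.isLt
  simp only [cycleEdge, Sym2.eq_iff, cycleNext, Fin.ext_iff] at h ⊢
  split_ifs at h <;> omega

theorem veDominates_iff {V : Type*} {G : SimpleGraph V} (hG : G.Connected) (w : V) (e : Sym2 V) :
    VEDominates G w e ↔ edgeDist G w e ≤ 1 := by
  have key : ∀ x, G.dist w x ≤ 1 ↔ w = x ∨ G.Adj w x := fun x => by
    rw [Nat.le_one_iff_eq_zero_or_eq_one, hG.dist_eq_zero_iff, dist_eq_one_iff_adj]
  constructor
  · rintro ⟨x, y, rfl, h⟩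
    simp only [edgeDist, Sym2.lift_mk, min_le_iff, key]
    tauto
  · induction e using Sym2.ind with
    | h x y =>
      intro h
      simp only [edgeDist, Sym2.lift_mk, min_le_iff, key] at h
      exact ⟨x, y, rfl, by tauto⟩

theorem isVEDominatingSet_iff {n : ℕ} (hn : 3 ≤ n) (T : Set (Fin n)) :
    IsVEDominatingSet (cycleGraph n) T ↔ ∀ i, ∃ w ∈ T, arcEdgeDist w i ≤ 1 := by
  simp only [IsVEDominatingSet, mem_edgeSet_iff hn, forall_exists_index, forall_apply_eq_imp_iff,
    veDominates_iff (cycleGraph_connected_of_three_le hn), edgeDist_cycleEdge hn]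

theorem isEdgeResolvingSet_iff {n : ℕ} (hn : 3 ≤ n) (A : Set (Fin n)) :
    IsEdgeResolvingSet (cycleGraph n) A ↔
      ∀ i j, i ≠ j → ∃ w ∈ A, arcEdgeDist w i ≠ arcEdgeDist w j := by
  simp only [IsEdgeResolvingSet, mem_edgeSet_iff hn, forall_exists_index, forall_apply_eq_imp_iff,
    edgeDist_cycleEdge hn, (cycleEdge_injective hn).ne_iff]

/-- Each vertex ve-dominates at most four edges. -/
theorem le_four_mul_card {n : ℕ} (hn : 3 ≤ n) (T : Finset (Fin n))
    (hT : IsVEDominatingSet (cycleGraph n) T) : n ≤ 4 * T.card := by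
  rw [isVEDominatingSet_iff hn] at hT
  have hsub : (Finset.univ : Finset (Fin n)) ⊆
      T.biUnion fun w => Finset.univ.filter fun i => arcEdgeDist w i ≤ 1 := by
    intro i _
    obtain ⟨w, hw, h⟩ := hT i
    simp only [Finset.mem_biUnion, Finset.mem_filter, Finset.mem_univ, true_and]
    exact ⟨w, hw, h⟩
  have hcard := (Finset.card_le_card hsub).trans (Finset.card_biUnion_le_card_mul _ _ 4 ?_)
  · simpa [mul_comm] using hcard
  intro w _
  have hmaps : (Finset.univ.filter fun i => arcEdgeDist w i ≤ 1).card ≤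
      ({0, 1, n - 2, n - 1} : Finset ℕ).card := by
    refine Finset.card_le_card_of_injOn (offset w) ?_ ?_
    · intro i hi
      have := i.isLt
      have := w.isLt
      rw [SetLike.mem_coe, Finset.mem_filter] at hi
      replace hi := hi.2
      unfold arcEdgeDist at hi
      simp only [Finset.coe_insert, Finset.coe_singleton, Set.mem_insert_iff,
        Set.mem_singleton_iff]
      unfold offset at *
      split_ifs at * <;> omega
    · intro i _ j _ h
      have := i.isLt
      have := j.isLt
      have := w.isLt
      unfold offset at h
      apply Fin.ext
      split_ifs at h <;> omega
  exact hmaps.trans Finset.card_le_four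

/-- A single vertex is at distance `0` from both edges incident to it, so it does not separate
them. -/
theorem two_le_card {n : ℕ} (hn : 3 ≤ n) (S : Finset (Fin n))
    (hS : IsEdgeResolvingSet (cycleGraph n) S) : 2 ≤ S.card := by
  rw [isEdgeResolvingSet_iff hn] at hS
  by_contra! h
  have hne : (⟨0, by omega⟩ : Fin n) ≠ ⟨1, by omega⟩ := by simp
  obtain ⟨w, hw, -⟩ := hS _ _ hne
  obtain ⟨a, rfl⟩ := Finset.card_eq_one.1
    (le_antisymm (by omega) (Finset.card_pos.2 ⟨w, hw⟩) : S.card = 1)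
  have ha := a.isLt
  let b : Fin n := ⟨if a.val = 0 then n - 1 else a.val - 1, by split <;> omega⟩
  have hb : b.val = if a.val = 0 then n - 1 else a.val - 1 := rfl
  have hab : a ≠ b := by
    rw [Ne, Fin.ext_iff, hb]
    split_ifs <;> omega
  obtain ⟨c, hc, hcne⟩ := hS a b hab
  simp only [Finset.coe_singleton, Set.mem_singleton_iff] at hc
  subst hc
  apply hcne
  simp only [arcEdgeDist, offset]
  rw [hb]
  split_ifs <;> omega

theorem gammaEmd_eq {V : Type*} [Fintype V] {G : SimpleGraph V} {k : ℕ} (S : Finset V)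
    (hcard : S.card = k) (hdom : IsVEDominatingSet G S) (hres : IsEdgeResolvingSet G S)
    (hle : ∀ T : Finset V, IsVEDominatingSet G T → IsEdgeResolvingSet G T → k ≤ T.card) :
    gammaEmd G = k := by
  refine IsLeast.csInf_eq ⟨⟨S, hcard, hdom, hres⟩, ?_⟩
  rintro _ ⟨T, rfl, h1, h2⟩
  exact hle T h1 h2

/-- Two vertices whose doubles differ modulo `n` resolve all edges. The congruence
`2a ≡ 2b (mod n)` for `a < b < n` means `2 * (b - a) = n`. -/
theorem isEdgeResolvingSet_of_mem {n : ℕ} (hn : 3 ≤ n) {A : Set (Fin n)} {a b : Fin n}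
    (ha : a ∈ A) (hb : b ∈ A) (hlt : a.val < b.val) (hne : a.val + a.val + n ≠ b.val + b.val) :
    IsEdgeResolvingSet (cycleGraph n) A := by
  rw [isEdgeResolvingSet_iff hn]
  intro i j hij
  by_contra! h
  have h1 := h a ha
  have h2 := h b hb
  have := i.isLt
  have := j.isLt
  have := b.isLt
  rw [Ne, Fin.ext_iff] at hij
  simp only [arcEdgeDist, offset] at h1 h2
  split_ifs at h1 h2 <;> omega

/-- The vertices of `C_n` whose label is a multiple of `4`. -/
def fourMultiples (n : ℕ) : Finset (Fin n) := Finset.univ.filter fun i => 4 ∣ i.val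

theorem card_fourMultiples (n : ℕ) : (fourMultiples n).card = (n + 3) / 4 := by
  rw [← Finset.card_range ((n + 3) / 4)]
  refine Finset.card_bij' (fun i _ => i.val / 4)
    (fun k hk => ⟨4 * k, by rw [Finset.mem_range] at hk; omega⟩) ?_ ?_ ?_ ?_
  · intro i hi
    have := i.isLt
    simp only [fourMultiples, Finset.mem_filter] at hi
    rw [Finset.mem_range]
    omega
  · intro k hk
    simp [fourMultiples]
  · intro i hi
    simp only [fourMultiples, Finset.mem_filter] at hi
    apply Fin.ext
    simp only
    omega
  · intro k hk
    simp

theorem isVEDominatingSet_fourMultiples {n : ℕ} (hn : 3 ≤ n) :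
    IsVEDominatingSet (cycleGraph n) (fourMultiples n) := by
  rw [isVEDominatingSet_iff hn]
  intro i
  have hi := i.isLt
  -- The vertex `4k` dominates the edges `4k - 2, …, 4k + 1`; if `4k ≥ n` then `i ≥ n - 2` and the
  -- vertex `0` dominates the edge `i`.
  by_cases h : 4 * ((i.val + 2) / 4) < n
  · refine ⟨⟨4 * ((i.val + 2) / 4), h⟩, by simp [fourMultiples], ?_⟩
    simp only [arcEdgeDist, offset]
    split_ifs <;> omega
  · refine ⟨⟨0, by omega⟩, by simp [fourMultiples], ?_⟩
    simp only [arcEdgeDist, offset]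
    split_ifs <;> omega

theorem isEdgeResolvingSet_fourMultiples {n : ℕ} (hn : 5 ≤ n) (h8 : n ≠ 8) :
    IsEdgeResolvingSet (cycleGraph n) (fourMultiples n) :=
  isEdgeResolvingSet_of_mem (by omega) (a := ⟨0, by omega⟩) (b := ⟨4, by omega⟩)
    (by simp [fourMultiples]) (by simp [fourMultiples]) (by simp) (by simpa using h8)

theorem gammaEmd_of_five_le {n : ℕ} (hn : 5 ≤ n) (h8 : n ≠ 8) :
    gammaEmd (cycleGraph n) = (n + 3) / 4 := by
  refine gammaEmd_eq (fourMultiples n) (card_fourMultiples n)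
    (isVEDominatingSet_fourMultiples (by omega)) (isEdgeResolvingSet_fourMultiples hn h8) ?_
  intro T hT _
  have := le_four_mul_card (by omega) T hT
  omega

theorem gammaEmd_of_le_four {n : ℕ} (hn : 3 ≤ n) (h4 : n ≤ 4) :
    gammaEmd (cycleGraph n) = 2 := by
  refine gammaEmd_eq {⟨0, by omega⟩, ⟨1, by omega⟩}
    (Finset.card_pair (by rw [Ne, Fin.mk.injEq]; omega)) ?_ ?_
    fun T _ hT => two_le_card hn T hT
  · rw [isVEDominatingSet_iff hn]
    intro i
    refine ⟨⟨0, by omega⟩, by simp, ?_⟩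
    simp only [arcEdgeDist, offset]
    split_ifs <;> omega
  · exact isEdgeResolvingSet_of_mem hn (a := ⟨0, by omega⟩) (b := ⟨1, by omega⟩)
      (by simp) (by simp) (by simp) (by simp; omega)

/-- In `C_8` no pair of vertices is both ve-dominating and edge resolving: if the pair is
ve-dominating, then its members are antipodal and do not separate the two edges at one of them. -/
theorem three_le_card_eight (T : Finset (Fin 8)) (hdom : IsVEDominatingSet (cycleGraph 8) T)
    (hres : IsEdgeResolvingSet (cycleGraph 8) T) : 3 ≤ T.card := by
  have h2 := two_le_card (by omega) T hres
  by_contra! h3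
  obtain ⟨a, b, -, rfl⟩ := Finset.card_eq_two.1 (by omega : T.card = 2)
  rw [isVEDominatingSet_iff (by omega)] at hdom
  rw [isEdgeResolvingSet_iff (by omega)] at hres
  simp only [Finset.coe_insert, Finset.coe_singleton, Set.mem_insert_iff, Set.mem_singleton_iff,
    exists_eq_or_imp, exists_eq_left] at hdom hres
  have hanti : ∀ a b : Fin 8, (∀ i, arcEdgeDist a i ≤ 1 ∨ arcEdgeDist b i ≤ 1) → b = a + 4 := by
    decide
  have hsame : ∀ a : Fin 8, arcEdgeDist a a = arcEdgeDist a (a - 1) ∧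
      arcEdgeDist (a + 4) a = arcEdgeDist (a + 4) (a - 1) ∧ a ≠ a - 1 := by
    decide
  obtain rfl := hanti a b hdom
  obtain ⟨h1, h2, hne⟩ := hsame a
  exact (hres _ _ hne).elim (· h1) (· h2)

theorem gammaEmd_eight : gammaEmd (cycleGraph 8) = 3 := by
  refine gammaEmd_eq {0, 1, 4} (by decide) ?_ ?_ three_le_card_eight
  · rw [isVEDominatingSet_iff (by omega)]
    have : ∀ i : Fin 8, ∃ w ∈ ({0, 1, 4} : Finset (Fin 8)), arcEdgeDist w i ≤ 1 := by decide
    exact_mod_cast this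
  · exact isEdgeResolvingSet_of_mem (by omega) (a := 0) (b := 1)
      (by simp) (by simp) (by decide) (by decide)

/-- The vertex-edge dominant edge metric dimension of the cycle graph `C_n`. -/
theorem stmt_1 (n : ℕ) :
    ((3 ≤ n ∧ n ≤ 7) → gammaEmd (cycleGraph n) = 2) ∧
    (n = 8 → gammaEmd (cycleGraph n) = 3) ∧
    (9 ≤ n → gammaEmd (cycleGraph n) = (n + 3) / 4) := by
  refine ⟨fun ⟨h3, h7⟩ => ?_, ?_, fun h => gammaEmd_of_five_le (by omega) (by omega)⟩
  · rcases Nat.lt_or_ge n 5 with h | h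
    · exact gammaEmd_of_le_four h3 (by omega)
    · rw [gammaEmd_of_five_le h (by omega)]
      omega
  · rintro rfl
    exact gammaEmd_eight
end

section
/- Let Γ be a finite connected simple graph of order n that has at least two vertices of degree n − 1. Then γ_emd(Γ) = n − 1. -/
/-!
Call a vertex universal if it is adjacent to every other vertex; by the degree hypothesis there are
two of them, `u ≠ v`. In a connected graph `d(w, e) = 0` exactly when `w ∈ e`, and `d(w, e) = 1`
when `w ∉ e` and `w` is adjacent to an endpoint of `e`.

Upper bound: `V \ {u}` works. The vertex `v` ve-dominates every edge, and two edges having the same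
endpoints outside `u` are equal, since both have exactly two endpoints.

Lower bound: suppose `S` misses two vertices `a ≠ b`. It suffices to find a vertex `c` adjacent to
`a` and `b` such that every `w ∈ S`, `w ≠ c`, is adjacent to `c` or to both `a` and `b`: then the
edges `ca` and `cb` are at distance `0` from `c` and at distance `1` from the rest of `S`. If some
universal vertex lies outside `{a, b}`, it serves as `c`. Otherwise `a` and `b` are themselves
universal and any `c ∈ S` serves; `S` is nonempty because it ve-dominates the edge `uv`.
-/

open SimpleGraph

lemma edgeDist_eq_zero_iff {V : Type*} {G : SimpleGraph V} (hG : G.Connected) (w : V)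
    (e : Sym2 V) : edgeDist G w e = 0 ↔ w ∈ e := by
  induction e with
  | _ x y =>
    simp only [edgeDist, Sym2.lift_mk, Sym2.mem_iff, Nat.min_eq_zero_iff, hG.dist_eq_zero_iff]

lemma edgeDist_eq_one {V : Type*} {G : SimpleGraph V} (hG : G.Connected) {w x y : V}
    (hx : w ≠ x) (hy : w ≠ y) (h : G.Adj w x ∨ G.Adj w y) : edgeDist G w s(x, y) = 1 := by
  have h0 := (edgeDist_eq_zero_iff hG w s(x, y)).not.mpr (by simp [hx, hy])
  have h1 : edgeDist G w s(x, y) ≤ 1 := by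
    simp only [edgeDist, Sym2.lift_mk]
    rcases h with h | h
    · exact (min_le_left _ _).trans (dist_eq_one_iff_adj.mpr h).le
    · exact (min_le_right _ _).trans (dist_eq_one_iff_adj.mpr h).le
  omega

lemma adj_of_degree_eq {V : Type*} [Fintype V] {G : SimpleGraph V} [DecidableRel G.Adj] {u : V}
    (hu : G.degree u = Fintype.card V - 1) {w : V} (hw : w ≠ u) : G.Adj w u := by
  classical
  have hsub : G.neighborFinset u ⊆ Finset.univ.erase u := by
    intro x hx
    simpa using ((G.mem_neighborFinset u x).mp hx).ne'
  have heq := Finset.eq_of_subset_of_card_le hsub (by simp [hu])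
  have hmem : w ∈ G.neighborFinset u := by simp [heq, hw]
  exact ((G.mem_neighborFinset u w).mp hmem).symm

/-- If `a` and `b` lie outside `S`, no vertex of `S` separates the edges `ca` and `cb` of a common
neighbour `c`, provided each vertex of `S` other than `c` is adjacent to `c` or to both `a`, `b`. -/
lemma not_isEdgeResolvingSet {V : Type*} {G : SimpleGraph V} (hG : G.Connected) {S : Set V}
    {a b c : V} (hab : a ≠ b) (ha : a ∉ S) (hb : b ∉ S) (hca : G.Adj c a) (hcb : G.Adj c b)
    (h : ∀ w ∈ S, w ≠ c → G.Adj w c ∨ (G.Adj w a ∧ G.Adj w b)) : ¬ IsEdgeResolvingSet G S := by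
  intro hS
  obtain ⟨w, hw, hne⟩ := hS s(c, a) hca s(c, b) hcb
    (fun hh => hab (Sym2.congr_right.mp hh))
  apply hne
  by_cases hwc : w = c
  · rw [(edgeDist_eq_zero_iff hG _ _).mpr (by simp [hwc]),
      (edgeDist_eq_zero_iff hG _ _).mpr (by simp [hwc])]
  · have hwa : w ≠ a := fun hh => ha (hh ▸ hw)
    have hwb : w ≠ b := fun hh => hb (hh ▸ hw)
    rw [edgeDist_eq_one hG hwc hwa ((h w hw hwc).imp_right And.left),
      edgeDist_eq_one hG hwc hwb ((h w hw hwc).imp_right And.right)]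

/-- An edge is determined by its endpoints other than `u`, so `V \ {u}` resolves all edges. -/
lemma isEdgeResolvingSet_ne {V : Type*} {G : SimpleGraph V} (hG : G.Connected) (u : V) :
    IsEdgeResolvingSet G {w | w ≠ u} := by
  intro e he f hf hef
  by_contra! hcon
  have key : ∀ w, w ≠ u → (w ∈ e ↔ w ∈ f) := fun w hw => by
    rw [← edgeDist_eq_zero_iff hG, ← edgeDist_eq_zero_iff hG, hcon w hw]
  apply hef
  induction e with
  | _ x y =>
    induction f with
    | _ z t =>
      have h1 : x ≠ y := G.ne_of_adj he
      have h2 : z ≠ t := G.ne_of_adj hf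
      simp only [Sym2.mem_iff] at key
      rw [Sym2.eq_iff]
      have := key x
      have := key y
      have := key z
      have := key t
      grind

/-- If `Γ` has at least two vertices of degree `n - 1`, then `γ_emd(Γ) = n - 1`. -/
theorem stmt_18 {V : Type*} [Fintype V] (G : SimpleGraph V) [DecidableRel G.Adj]
    (hG : G.Connected)
    (h : ∃ u v : V, u ≠ v ∧ G.degree u = Fintype.card V - 1 ∧
      G.degree v = Fintype.card V - 1) :
    gammaEmd G = Fintype.card V - 1 := by
  classical
  obtain ⟨u, v, huv, hdu, hdv⟩ := h
  have hu : ∀ w, w ≠ u → G.Adj w u := fun w hw => adj_of_degree_eq hdu hw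
  have hv : ∀ w, w ≠ v → G.Adj w v := fun w hw => adj_of_degree_eq hdv hw
  have hmem : Fintype.card V - 1 ∈ {k | ∃ S : Finset V, S.card = k ∧
      IsVEDominatingSet G ↑S ∧ IsEdgeResolvingSet G ↑S} := by
    refine ⟨Finset.univ.erase u, by simp, ?_, ?_⟩
    · intro e _
      refine ⟨v, by simp [huv.symm], ?_⟩
      induction e with
      | _ x y =>
        refine ⟨x, y, rfl, ?_⟩
        by_cases hx : v = x
        · exact Or.inl hx
        · exact Or.inr (Or.inr (Or.inl (hv x (Ne.symm hx)).symm))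
    · have hset : ((Finset.univ.erase u : Finset V) : Set V) = {w | w ≠ u} := by
        ext w
        simp
      rw [hset]
      exact isEdgeResolvingSet_ne hG u
  apply le_antisymm (Nat.sInf_le hmem)
  refine le_csInf ⟨_, hmem⟩ ?_
  rintro k ⟨S, rfl, hdom, hres⟩
  by_contra! hlt
  have hcompl : 1 < Sᶜ.card := by
    rw [Finset.card_compl]
    omega
  obtain ⟨a, ha, b, hb, hab⟩ := Finset.one_lt_card.mp hcompl
  rw [Finset.mem_compl] at ha hb
  -- A universal vertex outside `{a, b}` is a suitable common neighbour.
  have huniv : ∀ c, (∀ w, w ≠ c → G.Adj w c) → c ≠ a → c ≠ b → False := fun c hc hca hcb =>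
    not_isEdgeResolvingSet hG hab (S := (S : Set V)) (by simpa using ha) (by simpa using hb)
      (hc a hca.symm).symm (hc b hcb.symm).symm (fun w _ hw => Or.inl (hc w hw)) hres
  have hab_univ : ∀ w, w ∉ ({a, b} : Set V) → G.Adj w a ∧ G.Adj w b := by
    intro w hw
    simp only [Set.mem_insert_iff, Set.mem_singleton_iff, not_or] at hw
    have hu' : u = a ∨ u = b := by
      by_contra! hne
      exact huniv u hu hne.1 hne.2
    have hv' : v = a ∨ v = b := by
      by_contra! hne
      exact huniv v hv hne.1 hne.2
    rcases hu' with rfl | rfl <;> rcases hv' with rfl | rfl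
    · exact absurd rfl huv
    · exact ⟨hu w hw.1, hv w hw.2⟩
    · exact ⟨hv w hw.1, hu w hw.2⟩
    · exact absurd rfl huv
  obtain ⟨c, hcS, -⟩ := hdom s(u, v) (hv u huv)
  have hS : ∀ w ∈ (S : Set V), G.Adj w a ∧ G.Adj w b := by
    intro w hw
    apply hab_univ
    rintro (rfl | rfl)
    · exact ha hw
    · exact hb hw
  exact not_isEdgeResolvingSet hG hab (S := (S : Set V)) (by simpa using ha) (by simpa using hb)
    (hS c hcS).1 (hS c hcS).2 (fun w hw _ => Or.inr (hS w hw)) hres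
end
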